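/- Let n ≥ m ≥ 1 and let B_1,…,B_r ∈ ℝ^{n×m} satisfy Σ_{k=1}^r B_k^⊤B_k = I_m and Σ_{k=1}^r B_kB_k^⊤ ⪯ I_n. Let z_1,…,z_r be independent standard Gaussian real random variables on a probability space, set G = Σ_{k=1}^r z_k B_k, and let W = Σ_{k=1}^r vec(B_k)vec(B_k)^⊤ ∈ S^{nm}_+. Then σmax(G) > 0 almost surely, and for every v ∈ ℝ^{nm}, E[(v^⊤vec(G))²/σmax(G)²] ≥ max(2/(π·m), 1/(π·(log(2m)+1))) · v^⊤Wv; that is, E[vec(G)vec(G)^⊤/σmax(G)²] ⪰ max(2/(πm), 1/(π(log(2m)+1))) · W in the Loewner order. -/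

import Mathlib

open MeasureTheory ProbabilityTheory Matrix

/-- The largest singular value (spectral norm) of a real matrix. -/
noncomputable def sigmaMax {n m : ℕ} (G : Matrix (Fin n) (Fin m) ℝ) : ℝ :=
  ‖LinearMap.toContinuousLinearMap (Matrix.toEuclideanLin G)‖

/-- `vec(U)`: stacking the columns of `U`, indexed by (column, row) pairs. -/
def vecM {n m : ℕ} (U : Matrix (Fin n) (Fin m) ℝ) : Fin m × Fin n → ℝ :=
  fun p => U p.2 p.1

lemma integrable_pow_gaussianReal (k : ℕ) :
    Integrable (fun x : ℝ => x ^ k) (gaussianReal 0 1) := by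
  simpa using (memLp_id_gaussianReal' (μ := 0) (v := 1) k (by simp)).integrable_norm_pow'.mono'
    (f := fun x : ℝ => x ^ k) (by fun_prop) (by simp)

lemma hasDerivAt_gaussianPDFReal_zero_one (x : ℝ) :
    HasDerivAt (gaussianPDFReal 0 1) (-x * gaussianPDFReal 0 1 x) x := by
  have h := ((hasDerivAt_pow 2 x).neg.div_const 2).exp.const_mul (√(2 * Real.pi))⁻¹
  have e : gaussianPDFReal 0 1 = fun y => (√(2 * Real.pi))⁻¹ * Real.exp (-y ^ 2 / 2) := by
    ext y; simp [gaussianPDFReal]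
  rw [e]
  refine h.congr_deriv ?_
  simp
  ring

lemma integrable_pow_mul_gaussianPDFReal (k : ℕ) :
    Integrable (fun x : ℝ => x ^ k * gaussianPDFReal 0 1 x) := by
  have h := integrable_pow_gaussianReal k
  rw [gaussianReal_of_var_ne_zero 0 one_ne_zero,
    integrable_withDensity_iff_integrable_smul' (measurable_gaussianPDF 0 1)
      (by simp [gaussianPDF_lt_top])] at h
  simpa [toReal_gaussianPDF, mul_comm] using h

lemma integral_pow_succ_gaussianReal (k : ℕ) :
    ∫ x, x ^ (k + 1) ∂gaussianReal 0 1 = k * ∫ x, x ^ (k - 1) ∂gaussianReal 0 1 := by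
  have hd : ∀ x : ℝ, HasDerivAt (fun y => y ^ k * gaussianPDFReal 0 1 y)
      (k * (x ^ (k - 1) * gaussianPDFReal 0 1 x) - x ^ (k + 1) * gaussianPDFReal 0 1 x) x := by
    intro x
    refine ((hasDerivAt_pow k x).mul (hasDerivAt_gaussianPDFReal_zero_one x)).congr_deriv ?_
    rw [pow_succ]
    ring
  have h0 := integral_eq_zero_of_hasDerivAt_of_integrable hd
    (((integrable_pow_mul_gaussianPDFReal (k - 1)).const_mul _).sub
      (integrable_pow_mul_gaussianPDFReal (k + 1))) (integrable_pow_mul_gaussianPDFReal k)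
  rw [integral_sub ((integrable_pow_mul_gaussianPDFReal (k - 1)).const_mul _)
      (integrable_pow_mul_gaussianPDFReal (k + 1)), integral_const_mul] at h0
  simp only [integral_gaussianReal_eq_integral_smul one_ne_zero, smul_eq_mul,
    mul_comm (gaussianPDFReal 0 1 _)]
  linarith

lemma integral_abs_gaussianReal : ∫ x, |x| ∂gaussianReal 0 1 = √(2 / Real.pi) := by
  have h := integral_rpow_mul_exp_neg_mul_rpow (p := 2) (q := 1) (b := 1 / 2)
    (by norm_num) (by norm_num) (by norm_num)
  have h2 : ∫ x in Set.Ioi (0 : ℝ), x * Real.exp (-x ^ 2 / 2) = 1 := by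
    norm_num at h
    rw [← h]
    exact integral_congr_ae (by filter_upwards with x; ring_nf)
  have e : ∀ x : ℝ, gaussianPDFReal 0 1 x • |x|
      = (√(2 * Real.pi))⁻¹ * (|x| * Real.exp (-|x| ^ 2 / 2)) := by
    intro x
    simp [gaussianPDFReal]
    ring
  rw [integral_gaussianReal_eq_integral_smul one_ne_zero]
  simp only [e]
  rw [integral_const_mul, integral_comp_abs (f := fun x => x * Real.exp (-x ^ 2 / 2)), h2]
  rw [eq_comm, Real.sqrt_eq_iff_mul_self_eq (by positivity) (by positivity)]
  have := Real.mul_self_sqrt (show 0 ≤ 2 * Real.pi by positivity)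
  have hs : √(2 * Real.pi) ≠ 0 := by positivity
  field_simp
  rw [pow_two, this]

/-- The law of a standard Gaussian vector in `ℝ^r`. -/
noncomputable def stdGaussianPi (r : ℕ) : Measure (Fin r → ℝ) :=
  Measure.pi fun _ => gaussianReal 0 1

instance (r : ℕ) : IsProbabilityMeasure (stdGaussianPi r) := by
  unfold stdGaussianPi; infer_instance

open MvPolynomial in
lemma integrable_mvPolynomial_eval {r : ℕ} (p : MvPolynomial (Fin r) ℝ) :
    Integrable (fun x => eval x p) (stdGaussianPi r) := by
  induction p using MvPolynomial.induction_on' with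
  | monomial s a =>
    simp only [eval_monomial, Finsupp.prod_fintype _ _ (fun i => pow_zero _)]
    exact (Integrable.fintype_prod (f := fun i (t : ℝ) => t ^ s i)
      fun i => integrable_pow_gaussianReal (s i)).const_mul a
  | add p q hp hq =>
    simp only [map_add]
    exact hp.add hq

open MvPolynomial in
/-- Gaussian integration by parts for polynomials. -/
lemma integral_eval_X_mul {r : ℕ} (k : Fin r) (p : MvPolynomial (Fin r) ℝ) :
    ∫ x, x k * eval x p ∂stdGaussianPi r = ∫ x, eval x (pderiv k p) ∂stdGaussianPi r := by
  have hX : ∀ q : MvPolynomial (Fin r) ℝ, (fun x : Fin r → ℝ => x k * eval x q)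
      = fun x => eval x (X k * q) := by intro q; simp
  have hmon : ∀ (s : Fin r →₀ ℕ) (a : ℝ), ∫ x, eval x (monomial s a) ∂stdGaussianPi r
      = a * ∏ i, ∫ t, t ^ s i ∂gaussianReal 0 1 := by
    intro s a
    simp only [eval_monomial, Finsupp.prod_fintype _ _ (fun i => pow_zero _)]
    rw [integral_const_mul, stdGaussianPi,
      integral_fintype_prod_eq_prod (f := fun i (t : ℝ) => t ^ s i)]
  induction p using MvPolynomial.induction_on' with
  | monomial s a =>
    rw [hX, X, monomial_mul, pderiv_monomial, hmon, hmon, Fintype.prod_eq_mul_prod_compl k,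
      Fintype.prod_eq_mul_prod_compl k]
    have e : ∀ i ∈ ({k} : Finset (Fin r))ᶜ,
        ∫ t, t ^ (Finsupp.single k 1 + s : Fin r →₀ ℕ) i ∂gaussianReal 0 1
        = ∫ t, t ^ (s - Finsupp.single k 1 : Fin r →₀ ℕ) i ∂gaussianReal 0 1 := by
      intro i hi
      have : k ≠ i := by simpa [eq_comm] using hi
      simp [Finsupp.single_eq_of_ne' this]
    rw [Finset.prod_congr rfl e]
    simp only [Finsupp.add_apply, Finsupp.single_eq_same, add_comm 1, Finsupp.tsub_apply]
    rw [integral_pow_succ_gaussianReal]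
    ring
  | add p q hp hq =>
    rw [hX] at *
    rw [map_add, mul_add]
    simp only [map_add (eval _)]
    rw [integral_add (integrable_mvPolynomial_eval _) (integrable_mvPolynomial_eval _),
      integral_add (integrable_mvPolynomial_eval _) (integrable_mvPolynomial_eval _)]
    rw [← hp, ← hq]

lemma Matrix.IsHermitian.pow_eq_mul_diagonal_mul_star {ι : Type*} [Fintype ι] [DecidableEq ι]
    {H : Matrix ι ι ℝ} (hH : H.IsHermitian) (q : ℕ) :
    H ^ q = (hH.eigenvectorUnitary : Matrix ι ι ℝ) *
      diagonal (fun i => hH.eigenvalues i ^ q) * star (hH.eigenvectorUnitary : Matrix ι ι ℝ) := by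
  set U : Matrix ι ι ℝ := (hH.eigenvectorUnitary : Matrix ι ι ℝ) with hU
  have hUU : star U * U = 1 := Unitary.coe_star_mul_self hH.eigenvectorUnitary
  have hspec : H = U * diagonal hH.eigenvalues * star U := by
    conv_lhs => rw [hH.spectral_theorem]
    simp [Unitary.conjStarAlgAut_apply, hU]
  induction q with
  | zero =>
    simp only [pow_zero, diagonal_one, mul_one]
    exact (Unitary.coe_mul_star_self hH.eigenvectorUnitary).symm
  | succ q ih =>
    rw [pow_succ, ih]
    nth_rw 2 [hspec]
    calc _ = U * diagonal (fun i => hH.eigenvalues i ^ q) * (star U * U) *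
          diagonal hH.eigenvalues * star U := by noncomm_ring
      _ = _ := by
        rw [hUU, mul_one, mul_assoc U, diagonal_mul_diagonal]
        simp [pow_succ]

lemma trace_mul_pow_mul_pow_eq_sum {ι : Type*} [Fintype ι] [DecidableEq ι]
    {H A : Matrix ι ι ℝ} (hH : H.IsHermitian)
    (hA : A.IsHermitian) :
    ∃ (a : Matrix ι ι ℝ) (l : ι → ℝ), (∀ i j, a i j = a j i) ∧
      ∀ q s : ℕ, (A * H ^ q * A * H ^ s).trace
        = ∑ i, ∑ j, a i j ^ 2 * (l j ^ q * l i ^ s) := by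
  set U : Matrix ι ι ℝ := (hH.eigenvectorUnitary : Matrix ι ι ℝ) with hU
  have hpow := hH.pow_eq_mul_diagonal_mul_star
  have hsym : (star U * A * U).IsHermitian := by
    exact isHermitian_conjTranspose_mul_mul U hA
  refine ⟨star U * A * U, hH.eigenvalues, fun i j => by simpa using (hsym.apply i j).symm, ?_⟩
  intro q s
  rw [hpow q, hpow s]
  calc _ = ((A * U * diagonal (fun i => hH.eigenvalues i ^ q) * star U * A * U *
          diagonal (fun i => hH.eigenvalues i ^ s)) * star U).trace := by
        congr 1; noncomm_ring
    _ = ((star U * A * U) * diagonal (fun i => hH.eigenvalues i ^ q) * (star U * A * U) *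
          diagonal (fun i => hH.eigenvalues i ^ s)).trace := by
        rw [trace_mul_comm]; congr 1; noncomm_ring
    _ = _ := by
        simp only [trace, diag_apply, mul_diagonal]
        refine Finset.sum_congr rfl fun i _ => ?_
        rw [mul_apply, Finset.sum_mul]
        refine Finset.sum_congr rfl fun j _ => ?_
        rw [mul_diagonal, show (star U * A * U) j i = (star U * A * U) i j by
          simpa using (hsym.apply i j)]
        ring

lemma pow_mul_pow_add_le {N q : ℕ} (hN : Even N) (hq : q ≤ N) (a b : ℝ) :
    a ^ q * b ^ (N - q) + b ^ q * a ^ (N - q) ≤ a ^ N + b ^ N := by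
  have h1 : ∀ c d : ℝ, c ^ q * d ^ (N - q) ≤ |c| ^ q * |d| ^ (N - q) := by
    intro c d
    rw [← abs_pow, ← abs_pow, ← abs_mul]
    exact le_abs_self _
  have h2 : |a| ^ q * |b| ^ (N - q) + |b| ^ q * |a| ^ (N - q) ≤ |a| ^ N + |b| ^ N := by
    have e : ∀ c : ℝ, c ^ N = c ^ q * c ^ (N - q) := fun c => by
      rw [← pow_add, Nat.add_sub_cancel' hq]
    rw [e, e]
    rcases le_total |a| |b| with h | h
    · have := pow_le_pow_left₀ (abs_nonneg a) h q
      have := pow_le_pow_left₀ (abs_nonneg a) h (N - q)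
      nlinarith
    · have := pow_le_pow_left₀ (abs_nonneg b) h q
      have := pow_le_pow_left₀ (abs_nonneg b) h (N - q)
      nlinarith
  rw [hN.pow_abs, hN.pow_abs] at h2
  linarith [h1 a b, h1 b a]

lemma trace_mul_pow_mul_pow_le {ι : Type*} [Fintype ι] [DecidableEq ι]
    {H A : Matrix ι ι ℝ} (hH : H.IsHermitian)
    (hA : A.IsHermitian) {N q : ℕ} (hN : Even N) (hq : q ≤ N) :
    (A * H ^ q * A * H ^ (N - q)).trace ≤ (A * A * H ^ N).trace := by
  obtain ⟨a, l, ha, h⟩ := trace_mul_pow_mul_pow_eq_sum hH hA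
  have e : A * A * H ^ N = A * H ^ 0 * A * H ^ N := by simp
  rw [e, h, h]
  have swap : ∀ q s : ℕ, ∑ i, ∑ j, a i j ^ 2 * (l j ^ q * l i ^ s)
      = ∑ i, ∑ j, a i j ^ 2 * (l i ^ q * l j ^ s) := by
    intro q s
    rw [Finset.sum_comm]
    refine Finset.sum_congr rfl fun i _ => Finset.sum_congr rfl fun j _ => ?_
    rw [ha]
  have key : ∑ i, ∑ j, a i j ^ 2 * (l j ^ q * l i ^ (N - q))
        + ∑ i, ∑ j, a i j ^ 2 * (l i ^ q * l j ^ (N - q))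
      ≤ ∑ i, ∑ j, a i j ^ 2 * (l j ^ 0 * l i ^ N)
        + ∑ i, ∑ j, a i j ^ 2 * (l i ^ 0 * l j ^ N) := by
    simp only [← Finset.sum_add_distrib, ← mul_add]
    refine Finset.sum_le_sum fun i _ => Finset.sum_le_sum fun j _ => ?_
    refine mul_le_mul_of_nonneg_left ?_ (sq_nonneg _)
    simpa using (pow_mul_pow_add_le hN hq (l j) (l i)).trans_eq (add_comm _ _)
  rw [← swap, ← swap] at key
  linarith

lemma trace_mul_pow_le_trace_pow {ι : Type*} [Fintype ι] [DecidableEq ι]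
    {H V : Matrix ι ι ℝ} (hH : H.IsHermitian)
    (hV : (1 - V).PosSemidef) {N : ℕ} (hN : Even N) :
    (V * H ^ N).trace ≤ (H ^ N).trace := by
  obtain ⟨p, rfl⟩ := hN
  have hp : (H ^ p)ᴴ = H ^ p := by rw [conjTranspose_pow, hH.eq]
  have h := (hV.conjTranspose_mul_mul_same (H ^ p)).trace_nonneg
  rw [hp, trace_mul_comm, ← mul_assoc, ← pow_add, trace_mul_comm, sub_mul, one_mul,
    trace_sub] at h
  linarith

section Stein
open MvPolynomial

lemma Matrix.map_derivation_mul {ι : Type*} [Fintype ι] {r : ℕ} (k : Fin r)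
    (M N : Matrix ι ι (MvPolynomial (Fin r) ℝ)) :
    (M * N).map (pderiv k) = M.map (pderiv k) * N + M * N.map (pderiv k) := by
  ext1 i j
  simp only [map_apply, mul_apply, add_apply, map_sum, Derivation.leibniz, smul_eq_mul,
    ← Finset.sum_add_distrib]
  exact Finset.sum_congr rfl fun l _ => by ring

lemma Matrix.map_derivation_pow {ι : Type*} [Fintype ι] [DecidableEq ι] {r : ℕ} (k : Fin r)
    (M : Matrix ι ι (MvPolynomial (Fin r) ℝ)) (N : ℕ) :
    (M ^ (N + 1)).map (pderiv k)
      = ∑ q ∈ Finset.range (N + 1), M ^ q * M.map (pderiv k) * M ^ (N - q) := by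
  induction N with
  | zero => simp
  | succ N ih =>
    rw [pow_succ, Matrix.map_derivation_mul, ih, Finset.sum_range_succ _ (N + 1), Finset.sum_mul,
      Nat.sub_self, pow_zero, mul_one]
    refine congrArg (· + _) ?_
    refine Finset.sum_congr rfl fun q hq => ?_
    rw [mul_assoc, ← pow_succ, Nat.succ_sub (by simpa [Nat.lt_succ_iff] using hq)]
end Stein

open MvPolynomial in
/-- Gaussian integration by parts for the trace moments of a Gaussian matrix series. -/
lemma integral_trace_pow_eq {ι : Type*} [Fintype ι] [DecidableEq ι] {r : ℕ}
    (A : Fin r → Matrix ι ι ℝ) (N : ℕ) :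
    Integrable (fun x => ∑ k, ∑ q ∈ Finset.range (N + 1),
        (A k * (∑ k, x k • A k) ^ q * A k * (∑ k, x k • A k) ^ (N - q)).trace)
        (stdGaussianPi r) ∧
    ∫ x, ((∑ k, x k • A k) ^ (N + 2)).trace ∂stdGaussianPi r
      = ∫ x, ∑ k, ∑ q ∈ Finset.range (N + 1),
          (A k * (∑ k, x k • A k) ^ q * A k * (∑ k, x k • A k) ^ (N - q)).trace
          ∂stdGaussianPi r := by
  set P : Matrix ι ι (MvPolynomial (Fin r) ℝ) :=
    ∑ k, (X k : MvPolynomial (Fin r) ℝ) • (A k).map C with hP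
  have hev : ∀ x : Fin r → ℝ, (eval x).mapMatrix P = ∑ k, x k • A k := by
    intro x
    ext i j
    simp [hP, Matrix.sum_apply]
  have hevA : ∀ (x : Fin r → ℝ) k, (eval x).mapMatrix ((A k).map C) = A k := by
    intro x k
    ext i j
    simp
  have htr : ∀ (x : Fin r → ℝ) (M : Matrix ι ι (MvPolynomial (Fin r) ℝ)),
      eval x M.trace = ((eval x).mapMatrix M).trace := by
    intro x M
    simp [trace]
  have hdP : ∀ k, P.map (pderiv k) = (A k).map C := by
    intro k
    ext1 i j
    simp [hP, Matrix.sum_apply, Derivation.leibniz, pderiv_X, Pi.single_apply]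
  have hdA : ∀ k l, ((A l).map C : Matrix ι ι (MvPolynomial (Fin r) ℝ)).map (pderiv k) = 0 := by
    intro k l
    ext1 i j
    simp
  have hlhs : ∀ x : Fin r → ℝ, ((∑ k, x k • A k) ^ (N + 2)).trace
      = ∑ k, x k * eval x ((A k).map C * P ^ (N + 1)).trace := by
    intro x
    rw [pow_succ']
    nth_rw 1 [Finset.sum_mul]
    rw [trace_sum]
    refine Finset.sum_congr rfl fun k _ => ?_
    rw [htr, map_mul, map_pow, hev, hevA, smul_mul_assoc, trace_smul, smul_eq_mul]
  have hfi : ∀ k, Integrable (fun x => x k * eval x ((A k).map C * P ^ (N + 1)).trace)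
      (stdGaussianPi r) := by
    intro k
    refine (integrable_mvPolynomial_eval (X k * ((A k).map C * P ^ (N + 1)).trace)).congr ?_
    filter_upwards with x
    rw [eval_mul, eval_X]
  have hder : ∀ (x : Fin r → ℝ) k, eval x (pderiv k ((A k).map C * P ^ (N + 1)).trace)
      = ∑ q ∈ Finset.range (N + 1),
          (A k * (∑ k, x k • A k) ^ q * A k * (∑ k, x k • A k) ^ (N - q)).trace := by
    intro x k
    have h1 : pderiv k ((A k).map C * P ^ (N + 1)).trace
        = (((A k).map C * P ^ (N + 1)).map (pderiv k)).trace := by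
      simp [trace]
    rw [h1, htr, Matrix.map_derivation_mul, hdA, zero_mul, zero_add, Matrix.map_derivation_pow,
      hdP, map_mul, map_sum, hevA, Finset.mul_sum, trace_sum]
    refine Finset.sum_congr rfl fun q _ => ?_
    rw [map_mul, map_mul, map_pow, map_pow, hev, hevA, mul_assoc, mul_assoc, mul_assoc]
  simp only [hlhs, ← hder]
  refine ⟨integrable_finsetSum _ fun k _ => integrable_mvPolynomial_eval _, ?_⟩
  rw [integral_finsetSum _ fun k _ => hfi k,
    integral_finsetSum _ fun k _ => integrable_mvPolynomial_eval _]
  exact Finset.sum_congr rfl fun k _ => integral_eval_X_mul k _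

open MvPolynomial in
lemma integrable_trace_pow {ι : Type*} [Fintype ι] [DecidableEq ι] {r : ℕ}
    (A : Fin r → Matrix ι ι ℝ) (N : ℕ) :
    Integrable (fun x => ((∑ k, x k • A k) ^ N).trace) (stdGaussianPi r) := by
  have h := integrable_mvPolynomial_eval
    ((∑ k, (X k : MvPolynomial (Fin r) ℝ) •
      ((A k).map C : Matrix ι ι (MvPolynomial (Fin r) ℝ))) ^ N).trace
  convert h using 2 with x
  have : ∑ k, x k • A k
      = (eval x).mapMatrix (∑ k, (X k : MvPolynomial (Fin r) ℝ) •
        ((A k).map C : Matrix ι ι (MvPolynomial (Fin r) ℝ))) := by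
    ext i j
    simp [Matrix.sum_apply]
  rw [this, ← map_pow]
  simp [trace]

lemma isHermitian_sum_smul {ι : Type*} {r : ℕ} {A : Fin r → Matrix ι ι ℝ}
    (hA : ∀ k, (A k).IsHermitian) (x : Fin r → ℝ) : (∑ k, x k • A k).IsHermitian := by
  simp only [IsHermitian, conjTranspose_sum, conjTranspose_smul, (hA _).eq, star_trivial]

lemma integral_trace_pow_le {ι : Type*} [Fintype ι] [DecidableEq ι] {r : ℕ}
    {A : Fin r → Matrix ι ι ℝ} (hA : ∀ k, (A k).IsHermitian)
    (hV : (1 - ∑ k, A k * A k).PosSemidef) {N : ℕ} (hN : Even N) :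
    ∫ x, ((∑ k, x k • A k) ^ (N + 2)).trace ∂stdGaussianPi r
      ≤ (N + 1) * ∫ x, ((∑ k, x k • A k) ^ N).trace ∂stdGaussianPi r := by
  obtain ⟨hfi, heq⟩ := integral_trace_pow_eq A N
  rw [heq, ← integral_const_mul]
  refine integral_mono hfi ((integrable_trace_pow A N).const_mul _) fun x => ?_
  have hH := isHermitian_sum_smul hA x
  calc _ ≤ ∑ k, ∑ q ∈ Finset.range (N + 1), (A k * A k * (∑ k, x k • A k) ^ N).trace :=
        Finset.sum_le_sum fun k _ => Finset.sum_le_sum fun q hq =>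
          trace_mul_pow_mul_pow_le hH (hA k) hN (by simpa [Nat.lt_succ_iff] using hq)
    _ = (N + 1) * ((∑ k, A k * A k) * (∑ k, x k • A k) ^ N).trace := by
        rw [Finset.sum_mul, trace_sum, Finset.mul_sum]
        simp
    _ ≤ _ := mul_le_mul_of_nonneg_left (trace_mul_pow_le_trace_pow hH hV hN) (by positivity)

/-- Moment bound for Gaussian series of self-adjoint matrices with variance at most one. -/
lemma integral_trace_pow_le_doubleFactorial {ι : Type*} [Fintype ι] [DecidableEq ι] {r : ℕ}
    {A : Fin r → Matrix ι ι ℝ} (hA : ∀ k, (A k).IsHermitian)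
    (hV : (1 - ∑ k, A k * A k).PosSemidef) (p : ℕ) :
    ∫ x, ((∑ k, x k • A k) ^ (2 * (p + 1))).trace ∂stdGaussianPi r
      ≤ (2 * p + 1).doubleFactorial * (∑ k, A k * A k).trace := by
  induction p with
  | zero =>
    have h := (integral_trace_pow_eq A 0).2
    simp only [zero_add, Finset.sum_range_one, pow_zero, mul_one, Nat.sub_self,
      integral_const, probReal_univ, one_smul, ← trace_sum] at h
    simp [h]
  | succ p ih =>
    have h := integral_trace_pow_le hA hV (N := 2 * (p + 1)) (by simp)
    refine h.trans ?_
    rw [show 2 * (p + 1) + 1 = (2 * p + 1) + 2 by ring, Nat.doubleFactorial_add_two]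
    push_cast
    rw [mul_assoc]
    refine (mul_le_mul_of_nonneg_left ih (by positivity)).trans_eq ?_
    ring

lemma Matrix.IsHermitian.trace_pow_eq {ι : Type*} [Fintype ι] [DecidableEq ι]
    {H : Matrix ι ι ℝ} (hH : H.IsHermitian) (q : ℕ) :
    (H ^ q).trace = ∑ i, hH.eigenvalues i ^ q := by
  rw [hH.pow_eq_mul_diagonal_mul_star, trace_mul_comm, ← mul_assoc,
    Unitary.coe_star_mul_self, one_mul, trace_diagonal]

section Norm
open scoped Matrix.Norms.L2Operator

lemma sigmaMax_eq_norm {n m : ℕ} (G : Matrix (Fin n) (Fin m) ℝ) : sigmaMax G = ‖G‖ := by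
  rw [l2_opNorm_def]; rfl

lemma sigmaMax_pow_le_trace {n m : ℕ} (hm : 1 ≤ m) (G : Matrix (Fin n) (Fin m) ℝ) (p : ℕ) :
    sigmaMax G ^ (2 * p) ≤ ((Gᵀ * G) ^ p).trace := by
  have : Nonempty (Fin m) := ⟨⟨0, hm⟩⟩
  have hps : (Gᵀ * G).PosSemidef := posSemidef_conjTranspose_mul_self G
  have hnorm : sigmaMax G ^ 2 = ‖hps.1.eigenvalues‖ := by
    have h1 := hps.1.pow_eq_mul_diagonal_mul_star 1
    simp only [pow_one] at h1
    rw [sigmaMax_eq_norm, pow_two, ← l2_opNorm_conjTranspose_mul_self]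
    change ‖Gᵀ * G‖ = _
    refine (congrArg norm h1).trans ?_
    rw [← Unitary.coe_star, CStarRing.norm_mul_coe_unitary, CStarRing.norm_coe_unitary_mul,
      l2_opNorm_diagonal]
  obtain ⟨i, hi⟩ : ∃ i, ‖hps.1.eigenvalues‖ = ‖hps.1.eigenvalues i‖ := by
    obtain ⟨i, -, hi⟩ := Finset.exists_max_image Finset.univ (fun i => ‖hps.1.eigenvalues i‖)
      Finset.univ_nonempty
    exact ⟨i, le_antisymm ((pi_norm_le_iff_of_nonneg (norm_nonneg _)).2 fun j =>
      hi j (Finset.mem_univ j)) (norm_le_pi_norm _ i)⟩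
  rw [pow_mul, hnorm, hi, hps.1.trace_pow_eq, Real.norm_of_nonneg (hps.eigenvalues_nonneg i)]
  exact Finset.single_le_sum (f := fun i => hps.1.eigenvalues i ^ p)
    (fun j _ => pow_nonneg (hps.eigenvalues_nonneg j) p) (Finset.mem_univ i)

lemma sigmaMax_pos {n m : ℕ} {G : Matrix (Fin n) (Fin m) ℝ} (hG : G ≠ 0) : 0 < sigmaMax G := by
  rw [sigmaMax_eq_norm]; exact norm_pos_iff.2 hG

lemma abs_entry_le_sigmaMax {n m : ℕ} (G : Matrix (Fin n) (Fin m) ℝ) (i : Fin n) (j : Fin m) :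
    |G i j| ≤ sigmaMax G := by
  have h := (LinearMap.toContinuousLinearMap (Matrix.toEuclideanLin G)).le_opNorm
    (EuclideanSpace.single j 1)
  rw [PiLp.norm_single, norm_one, mul_one] at h
  refine le_trans ?_ h
  refine le_trans (le_of_eq ?_) (PiLp.norm_apply_le _ i)
  simp [Matrix.toEuclideanLin, Matrix.toLpLin_apply]

lemma sigmaMax_nonneg {n m : ℕ} (G : Matrix (Fin n) (Fin m) ℝ) : 0 ≤ sigmaMax G :=
  norm_nonneg _

lemma continuous_sigmaMax_sum {n m r : ℕ} (B : Fin r → Matrix (Fin n) (Fin m) ℝ) :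
    Continuous fun x : Fin r → ℝ => sigmaMax (∑ k, x k • B k) := by
  simp only [sigmaMax_eq_norm]
  fun_prop

end Norm

/-- The self-adjoint dilation of a rectangular matrix. -/
def dilation {n m : ℕ} (G : Matrix (Fin n) (Fin m) ℝ) :
    Matrix (Fin n ⊕ Fin m) (Fin n ⊕ Fin m) ℝ :=
  fromBlocks 0 G Gᵀ 0

lemma isHermitian_dilation {n m : ℕ} (G : Matrix (Fin n) (Fin m) ℝ) :
    (dilation G).IsHermitian := by
  simp [dilation, IsHermitian, fromBlocks_transpose, conjTranspose_eq_transpose_of_trivial]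

lemma sum_smul_dilation {n m r : ℕ} (B : Fin r → Matrix (Fin n) (Fin m) ℝ) (x : Fin r → ℝ) :
    ∑ k, x k • dilation (B k) = dilation (∑ k, x k • B k) := by
  ext (i | i) (j | j) <;> simp [dilation, Matrix.sum_apply]

lemma dilation_mul_self {n m : ℕ} (G : Matrix (Fin n) (Fin m) ℝ) :
    dilation G * dilation G = fromBlocks (G * Gᵀ) 0 0 (Gᵀ * G) := by
  simp [dilation, fromBlocks_multiply]

lemma sum_dilation_mul_self {n m r : ℕ} (B : Fin r → Matrix (Fin n) (Fin m) ℝ) :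
    ∑ k, dilation (B k) * dilation (B k)
      = fromBlocks (∑ k, B k * (B k)ᵀ) 0 0 (∑ k, (B k)ᵀ * B k) := by
  simp only [dilation_mul_self]
  ext (i | i) (j | j) <;> simp [Matrix.sum_apply]

lemma trace_mul_transpose_pow {n m : ℕ} (G : Matrix (Fin n) (Fin m) ℝ) (p : ℕ) :
    ((G * Gᵀ) ^ (p + 1)).trace = ((Gᵀ * G) ^ (p + 1)).trace := by
  have h : ∀ q : ℕ, (G * Gᵀ) ^ (q + 1) = G * (Gᵀ * G) ^ q * Gᵀ := by
    intro q
    induction q with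
    | zero => simp
    | succ q ih =>
      rw [pow_succ, ih, pow_succ]
      simp only [Matrix.mul_assoc]
  rw [h, trace_mul_comm, ← Matrix.mul_assoc, ← pow_succ']

lemma trace_fromBlocks_eq_add {α β R : Type*} [Fintype α] [Fintype β] [AddCommMonoid R]
    (A : Matrix α α R) (B : Matrix α β R) (C : Matrix β α R) (D : Matrix β β R) :
    (fromBlocks A B C D).trace = A.trace + D.trace := by
  simp [trace, Fintype.sum_sum_type]

lemma two_mul_sigmaMax_pow_le_trace_dilation {n m : ℕ} (hm : 1 ≤ m)
    (G : Matrix (Fin n) (Fin m) ℝ) (p : ℕ) :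
    2 * sigmaMax G ^ (2 * (p + 1)) ≤ (dilation G ^ (2 * (p + 1))).trace := by
  have h := sigmaMax_pow_le_trace hm G (p + 1)
  rw [pow_mul (dilation G), pow_two, dilation_mul_self, fromBlocks_diagonal_pow,
    trace_fromBlocks_eq_add, trace_mul_transpose_pow]
  linarith

lemma posSemidef_one_sub_sum_dilation {n m r : ℕ} {B : Fin r → Matrix (Fin n) (Fin m) ℝ}
    (hBtB : ∑ k, (B k)ᵀ * B k = 1)
    (hBBt : ((1 : Matrix (Fin n) (Fin n) ℝ) - ∑ k, B k * (B k)ᵀ).PosSemidef) :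
    (1 - ∑ k, dilation (B k) * dilation (B k)).PosSemidef := by
  have e : 1 - ∑ k, dilation (B k) * dilation (B k)
      = fromBlocks (1 - ∑ k, B k * (B k)ᵀ) 0 0 (0 : Matrix (Fin m) (Fin m) ℝ) := by
    rw [sum_dilation_mul_self, hBtB, ← fromBlocks_one]
    ext (i | i) (j | j) <;> simp [Matrix.one_apply]
  rw [e]
  refine PosSemidef.of_dotProduct_mulVec_nonneg ?_ fun x => ?_
  · exact hBBt.1.fromBlocks (by simp) isHermitian_zero
  · rw [fromBlocks_mulVec]
    simpa [dotProduct] using hBBt.dotProduct_mulVec_nonneg (x ∘ Sum.inl)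

lemma trace_sum_dilation {n m r : ℕ} {B : Fin r → Matrix (Fin n) (Fin m) ℝ}
    (hBtB : ∑ k, (B k)ᵀ * B k = 1) :
    (∑ k, dilation (B k) * dilation (B k)).trace = 2 * m := by
  have h : (∑ k, B k * (B k)ᵀ).trace = (∑ k, (B k)ᵀ * B k).trace := by
    rw [trace_sum, trace_sum]
    exact Finset.sum_congr rfl fun k _ => trace_mul_comm _ _
  rw [sum_dilation_mul_self, trace_fromBlocks_eq_add, h, hBtB, trace_one, Fintype.card_fin]
  ring

open Nat in
lemma lintegral_cosh_le {Ω : Type*} [MeasurableSpace Ω] {ν : Measure Ω}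
    {f : Ω → ℝ} (hf : Measurable f) {m : ℝ} (hm : 0 ≤ m)
    (hfi : ∀ p : ℕ, Integrable (fun x => f x ^ (2 * p)) ν)
    (hmom : ∀ p : ℕ, ∫ x, f x ^ (2 * p) ∂ν ≤ m * ((2 * p)! / (2 ^ p * p !))) (t : ℝ) :
    ∫⁻ x, ENNReal.ofReal (Real.cosh (t * f x)) ∂ν
      ≤ ENNReal.ofReal (m * Real.exp (t ^ 2 / 2)) := by
  have hnn : ∀ x (p : ℕ), 0 ≤ (t * f x) ^ (2 * p) / (2 * p)! := fun x p => by
    rw [pow_mul]; positivity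
  have hc : ∀ x, ENNReal.ofReal (Real.cosh (t * f x))
      = ∑' p : ℕ, ENNReal.ofReal ((t * f x) ^ (2 * p) / (2 * p)!) := by
    intro x
    rw [Real.cosh_eq_tsum, ENNReal.ofReal_tsum_of_nonneg (hnn x) (Real.hasSum_cosh _).summable]
  simp only [hc]
  rw [lintegral_tsum fun p => by fun_prop]
  have hexp : HasSum (fun p : ℕ => m * ((t ^ 2 / 2) ^ p / p !)) (m * Real.exp (t ^ 2 / 2)) := by
    rw [Real.exp_eq_exp_ℝ]
    exact (NormedSpace.expSeries_div_hasSum_exp (t ^ 2 / 2)).mul_left m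
  rw [← hexp.tsum_eq, ENNReal.ofReal_tsum_of_nonneg (fun p => by positivity) hexp.summable]
  refine ENNReal.tsum_le_tsum fun p => ?_
  have e : ∀ x, (t * f x) ^ (2 * p) / (2 * p)! = t ^ (2 * p) / (2 * p)! * f x ^ (2 * p) :=
    fun x => by rw [mul_pow]; ring
  rw [← ofReal_integral_eq_lintegral_ofReal]
  · refine ENNReal.ofReal_le_ofReal ?_
    simp only [e]
    rw [integral_const_mul]
    have ht : 0 ≤ t ^ (2 * p) / (2 * p)! := by rw [pow_mul]; positivity
    refine (mul_le_mul_of_nonneg_left (hmom p) ht).trans_eq ?_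
    rw [pow_mul, div_pow]
    have := Nat.factorial_ne_zero (2 * p)
    field_simp
  · simp only [e]
    exact (hfi p).const_mul _
  · filter_upwards with x using hnn x p

open Nat in
lemma measureReal_lt_sq_le {Ω : Type*} [MeasurableSpace Ω] {ν : Measure Ω}
    {f : Ω → ℝ} (hf : Measurable f) (hf0 : ∀ x, 0 ≤ f x) {m : ℝ} (hm : 0 ≤ m)
    (hfi : ∀ p : ℕ, Integrable (fun x => f x ^ (2 * p)) ν)
    (hmom : ∀ p : ℕ, ∫ x, f x ^ (2 * p) ∂ν ≤ m * ((2 * p)! / (2 ^ p * p !)))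
    {u : ℝ} (hu : 0 ≤ u) :
    ν.real {x | u < f x ^ 2} ≤ 2 * m * Real.exp (-u / 2) := by
  have h1 := lintegral_cosh_le hf hm hfi hmom (√u)
  have h2 := mul_meas_ge_le_lintegral (μ := ν)
    (f := fun x => ENNReal.ofReal (Real.cosh (√u * f x))) (by fun_prop)
    (ENNReal.ofReal (Real.exp u / 2))
  have hsub : {x | u < f x ^ 2} ⊆
      {x | ENNReal.ofReal (Real.exp u / 2) ≤ ENNReal.ofReal (Real.cosh (√u * f x))} := by
    intro x hx
    refine ENNReal.ofReal_le_ofReal ?_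
    have hlt : √u ≤ f x := Real.sqrt_le_iff.2 ⟨hf0 x, le_of_lt hx⟩
    have hle : u ≤ √u * f x := by
      nlinarith [Real.sqrt_nonneg u, Real.mul_self_sqrt hu]
    rw [Real.cosh_eq]
    have := Real.exp_le_exp.2 hle
    have := Real.exp_pos (-(√u * f x))
    linarith
  have h3 : ENNReal.ofReal (Real.exp u / 2) * ν {x | u < f x ^ 2}
      ≤ ENNReal.ofReal (m * Real.exp (u / 2)) := by
    refine (mul_le_mul_right (measure_mono hsub) _).trans (h2.trans ?_)
    simpa [Real.sq_sqrt hu] using h1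
  have h4 := ENNReal.toReal_mono ENNReal.ofReal_ne_top h3
  rw [ENNReal.toReal_mul, ENNReal.toReal_ofReal (by positivity),
    ENNReal.toReal_ofReal (by positivity)] at h4
  change _ * ν.real _ ≤ _ at h4
  have e1 : Real.exp u = Real.exp (u / 2) * Real.exp (u / 2) := by
    rw [← Real.exp_add]; ring_nf
  have e2 : Real.exp (-u / 2) * Real.exp (u / 2) = 1 := by
    rw [← Real.exp_add]; ring_nf; exact Real.exp_zero
  have hp := Real.exp_pos (u / 2)
  have hq := Real.exp_pos (-u / 2)
  have h5 : Real.exp (u / 2) * ν.real {x | u < f x ^ 2} ≤ 2 * m := by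
    rw [e1] at h4
    by_contra! hlt
    nlinarith
  calc ν.real {x | u < f x ^ 2}
      = Real.exp (-u / 2) * (Real.exp (u / 2) * ν.real {x | u < f x ^ 2}) := by
        rw [← mul_assoc, e2, one_mul]
    _ ≤ Real.exp (-u / 2) * (2 * m) := mul_le_mul_of_nonneg_left h5 hq.le
    _ = _ := by ring

open Nat in
/-- A nonnegative variable whose even moments are at most `m` times the standard Gaussian ones
has second moment at most `2 log (2m) + 2`. -/
lemma integral_sq_le_log {Ω : Type*} [MeasurableSpace Ω] {ν : Measure Ω} [IsProbabilityMeasure ν]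
    {f : Ω → ℝ} (hf : Measurable f) (hf0 : ∀ x, 0 ≤ f x) {m : ℝ} (hm : 1 ≤ m)
    (hfi : ∀ p : ℕ, Integrable (fun x => f x ^ (2 * p)) ν)
    (hmom : ∀ p : ℕ, ∫ x, f x ^ (2 * p) ∂ν ≤ m * ((2 * p)! / (2 ^ p * p !))) :
    ∫ x, f x ^ 2 ∂ν ≤ 2 * Real.log (2 * m) + 2 := by
  set u := 2 * Real.log (2 * m) with hu
  have hu0 : 0 ≤ u := by have := Real.log_nonneg (show 1 ≤ 2 * m by linarith); positivity
  have hsq : Integrable (fun x => f x ^ 2) ν := by simpa using hfi 1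
  have hg : Integrable (fun x => max (f x ^ 2 - u) 0) ν :=
    (hsq.sub (integrable_const u)).pos_part
  have hlayer := hg.integral_eq_integral_meas_lt (by filter_upwards with x using le_max_right _ _)
  have htail : ∫ x, max (f x ^ 2 - u) 0 ∂ν ≤ 2 := by
    rw [hlayer]
    have hexp := integral_exp_mul_Ioi (a := -(1 / 2)) (by norm_num) 0
    have : ∫ t in Set.Ioi (0 : ℝ), Real.exp (-(1 / 2) * t) = 2 := by rw [hexp]; norm_num
    rw [← this]
    refine integral_mono_of_nonneg (by filter_upwards with t using measureReal_nonneg)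
      (integrableOn_exp_mul_Ioi (by norm_num) 0) ?_
    filter_upwards [ae_restrict_mem measurableSet_Ioi] with t ht
    have ht : 0 < t := ht
    have hset : {x | t < max (f x ^ 2 - u) 0} = {x | t + u < f x ^ 2} := by
      ext x
      simp [ht.not_gt, lt_sub_iff_add_lt]
    rw [hset]
    refine (measureReal_lt_sq_le hf hf0 (by linarith) hfi hmom (by linarith)).trans_eq ?_
    have : -(t + u) / 2 = -(1 / 2) * t + -Real.log (2 * m) := by rw [hu]; ring
    rw [this, Real.exp_add, Real.exp_neg, Real.exp_log (by linarith)]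
    field_simp
  calc ∫ x, f x ^ 2 ∂ν ≤ ∫ x, (u + max (f x ^ 2 - u) 0) ∂ν :=
        integral_mono hsq ((integrable_const u).add hg) fun x => by
          have := le_max_left (f x ^ 2 - u) 0
          dsimp only
          linarith
    _ = u + ∫ x, max (f x ^ 2 - u) 0 ∂ν := by
        rw [integral_add (integrable_const u) hg]; simp
    _ ≤ _ := by linarith

lemma map_sum_mul_stdGaussianPi {r : ℕ} (c : Fin r → ℝ) :
    (stdGaussianPi r).map (fun x => ∑ k, c k * x k)
      = gaussianReal 0 (∑ k, NNReal.mk (c k ^ 2) (sq_nonneg _)) := by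
  have hind : iIndepFun (fun k (x : Fin r → ℝ) => c k * x k) (stdGaussianPi r) :=
    iIndepFun_pi (X := fun k t => c k * t) fun k => by fun_prop
  have hlaw : ∀ k, (stdGaussianPi r).map (fun x => c k * x k)
      = gaussianReal 0 (NNReal.mk (c k ^ 2) (sq_nonneg _)) := by
    intro k
    have h : (stdGaussianPi r).map (fun x => x k) = gaussianReal 0 1 :=
      (measurePreserving_eval (fun _ : Fin r => gaussianReal 0 1) k).map_eq
    have h2 := gaussianReal_map_const_mul (μ := 0) (v := 1) (c k)
    rw [← h, Measure.map_map (by fun_prop) (by fun_prop)] at h2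
    simpa [Function.comp_def] using h2
  have key : ∀ s : Finset (Fin r), (stdGaussianPi r).map (∑ k ∈ s, fun x => c k * x k)
      = gaussianReal 0 (∑ k ∈ s, NNReal.mk (c k ^ 2) (sq_nonneg _)) := by
    intro s
    induction s using Finset.induction_on with
    | empty =>
      simp only [Finset.sum_empty, gaussianReal_zero_var]
      change Measure.map (fun _ => (0 : ℝ)) _ = _
      simp
    | insert k s hk ih =>
      rw [Finset.sum_insert hk, Finset.sum_insert hk]
      have := gaussianReal_add_gaussianReal_of_indepFun
        (hind.indepFun_finsetSum_of_notMem (fun k => by fun_prop) hk).symm (hlaw k) ih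
      simpa using this
  have := key Finset.univ
  convert this using 2
  ext x
  simp

lemma integral_abs_sum_mul_stdGaussianPi {r : ℕ} (c : Fin r → ℝ) :
    ∫ x, |∑ k, c k * x k| ∂stdGaussianPi r = √(∑ k, c k ^ 2) * √(2 / Real.pi) := by
  have h := gaussianReal_map_const_mul (μ := 0) (v := 1) (√(∑ k, c k ^ 2))
  have e : (NNReal.mk (√(∑ k, c k ^ 2) ^ 2) (sq_nonneg _) * 1)
      = ∑ k, NNReal.mk (c k ^ 2) (sq_nonneg _) := by
    ext
    simp [Real.sq_sqrt (Finset.sum_nonneg fun k _ => sq_nonneg (c k))]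
  have h1 := integral_map (μ := stdGaussianPi r) (φ := fun x => ∑ k, c k * x k)
    (Measurable.aemeasurable (by fun_prop)) (f := fun t => |t|) (by fun_prop)
  rw [mul_zero, e] at h
  rw [← h1, map_sum_mul_stdGaussianPi, ← h,
    integral_map (by fun_prop) (by fun_prop)]
  simp only [abs_mul, abs_of_nonneg (Real.sqrt_nonneg _)]
  rw [integral_const_mul, integral_abs_gaussianReal]

lemma ae_sum_mul_ne_zero {r : ℕ} {c : Fin r → ℝ} {k : Fin r} (hk : c k ≠ 0) :
    ∀ᵐ x ∂stdGaussianPi r, ∑ k, c k * x k ≠ 0 := by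
  have hv : (∑ k, NNReal.mk (c k ^ 2) (sq_nonneg _) : NNReal) ≠ 0 := by
    intro h
    have := (Finset.sum_eq_zero_iff.1 h) k (Finset.mem_univ k)
    exact hk (by simpa using congrArg NNReal.toReal this)
  have := nullSingletonClass_gaussianReal (μ := 0) hv
  have h0 : gaussianReal 0 (∑ k, NNReal.mk (c k ^ 2) (sq_nonneg _)) {0} = 0 := measure_singleton 0
  rw [← map_sum_mul_stdGaussianPi, Measure.map_apply (by fun_prop) (measurableSet_singleton 0)]
    at h0
  rw [ae_iff]
  simp only [not_not]
  exact h0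

lemma sigmaMax_pow_succ_le_trace_sum_dilation {n m r : ℕ} (hm : 1 ≤ m)
    (B : Fin r → Matrix (Fin n) (Fin m) ℝ) (p : ℕ) (x : Fin r → ℝ) :
    2 * sigmaMax (∑ k, x k • B k) ^ (2 * (p + 1))
      ≤ ((∑ k, x k • dilation (B k)) ^ (2 * (p + 1))).trace := by
  rw [sum_smul_dilation]
  exact two_mul_sigmaMax_pow_le_trace_dilation hm _ p

lemma integrable_sigmaMax_pow {n m r : ℕ} (hm : 1 ≤ m)
    (B : Fin r → Matrix (Fin n) (Fin m) ℝ) (p : ℕ) :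
    Integrable (fun x => sigmaMax (∑ k, x k • B k) ^ (2 * p)) (stdGaussianPi r) := by
  cases p with
  | zero => simp
  | succ p =>
    refine (integrable_trace_pow (fun k => dilation (B k)) (2 * (p + 1))).mono'
      ((continuous_sigmaMax_sum B).pow _).aestronglyMeasurable (.of_forall fun x => ?_)
    have h0 : 0 ≤ sigmaMax (∑ k, x k • B k) ^ (2 * (p + 1)) := pow_nonneg (sigmaMax_nonneg _) _
    rw [Real.norm_of_nonneg h0]
    linarith [sigmaMax_pow_succ_le_trace_sum_dilation hm B p x]

/-- The even moments of the spectral norm of a normalized Gaussian series are at most `m` times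
those of a standard Gaussian. -/
lemma integral_sigmaMax_pow_le {n m r : ℕ} (hm : 1 ≤ m)
    {B : Fin r → Matrix (Fin n) (Fin m) ℝ} (hBtB : ∑ k, (B k)ᵀ * B k = 1)
    (hBBt : ((1 : Matrix (Fin n) (Fin n) ℝ) - ∑ k, B k * (B k)ᵀ).PosSemidef) (p : ℕ) :
    ∫ x, sigmaMax (∑ k, x k • B k) ^ (2 * p) ∂stdGaussianPi r
      ≤ m * ((2 * p).factorial / (2 ^ p * p.factorial)) := by
  cases p with
  | zero => simpa using hm
  | succ p =>
    have h1 := integral_trace_pow_le_doubleFactorial (fun k => isHermitian_dilation (B k))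
      (posSemidef_one_sub_sum_dilation hBtB hBBt) p
    have h2 : ∫ x, 2 * sigmaMax (∑ k, x k • B k) ^ (2 * (p + 1)) ∂stdGaussianPi r
        ≤ ∫ x, ((∑ k, x k • dilation (B k)) ^ (2 * (p + 1))).trace ∂stdGaussianPi r :=
      integral_mono ((integrable_sigmaMax_pow hm B (p + 1)).const_mul 2)
        (integrable_trace_pow _ _) (sigmaMax_pow_succ_le_trace_sum_dilation hm B p)
    rw [integral_const_mul] at h2
    rw [trace_sum_dilation hBtB] at h1
    have hf : ((2 * (p + 1)).factorial : ℝ) / (2 ^ (p + 1) * (p + 1).factorial)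
        = (2 * p + 1).doubleFactorial := by
      have e : (2 * (p + 1)).factorial
          = (2 ^ (p + 1) * (p + 1).factorial) * (2 * p + 1).doubleFactorial := by
        rw [← Nat.doubleFactorial_two_mul]
        exact Nat.factorial_eq_mul_doubleFactorial (2 * p + 1)
      rw [e]
      push_cast
      field_simp
    rw [hf]
    linarith

lemma ae_sigmaMax_pos {n m r : ℕ} {B : Fin r → Matrix (Fin n) (Fin m) ℝ} (hB : B ≠ 0) :
    ∀ᵐ x ∂stdGaussianPi r, 0 < sigmaMax (∑ k, x k • B k) := by
  obtain ⟨k, i, j, hij⟩ : ∃ k i j, B k i j ≠ 0 := by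
    contrapose! hB
    ext k i j
    exact hB k i j
  filter_upwards [ae_sum_mul_ne_zero (c := fun k => B k i j) hij] with x hx
  refine sigmaMax_pos fun h => hx ?_
  have := congrFun (congrFun h i) j
  simpa [Matrix.sum_apply, mul_comm] using this

lemma sum_mul_vecM_sum_smul {n m r : ℕ} (B : Fin r → Matrix (Fin n) (Fin m) ℝ)
    (v : Fin m × Fin n → ℝ) (x : Fin r → ℝ) :
    ∑ p, v p * vecM (∑ k, x k • B k) p = ∑ k, (v ⬝ᵥ vecM (B k)) * x k := by
  simp only [vecM, Matrix.sum_apply, Matrix.smul_apply, smul_eq_mul, dotProduct, Finset.mul_sum,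
    Finset.sum_mul]
  rw [Finset.sum_comm]
  exact Finset.sum_congr rfl fun k _ => Finset.sum_congr rfl fun p _ => by ring

lemma dotProduct_sum_vecMulVec_mulVec {ι κ : Type*} [Fintype ι] [Fintype κ] (b : κ → ι → ℝ)
    (v : ι → ℝ) :
    v ⬝ᵥ (∑ k, vecMulVec (b k) (b k)) *ᵥ v = ∑ k, (v ⬝ᵥ b k) ^ 2 := by
  rw [sum_mulVec, dotProduct_sum]
  refine Finset.sum_congr rfl fun k _ => ?_
  rw [vecMulVec_mulVec, dotProduct_smul, dotProduct_comm (b k) v]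
  simp [pow_two]

lemma abs_sum_mul_vecM_le {n m : ℕ} (v : Fin m × Fin n → ℝ) (G : Matrix (Fin n) (Fin m) ℝ) :
    |∑ p, v p * vecM G p| ≤ (∑ p, |v p|) * sigmaMax G := by
  rw [Finset.sum_mul]
  refine (Finset.abs_sum_le_sum_abs _ _).trans (Finset.sum_le_sum fun p _ => ?_)
  rw [abs_mul]
  exact mul_le_mul_of_nonneg_left (abs_entry_le_sigmaMax G p.2 p.1) (abs_nonneg _)

/-- A reversed Cauchy–Schwarz estimate: a second-moment bound on the denominator bounds the
normalized second moment from below. -/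
lemma sq_integral_abs_div_le_integral_sq_div_sq {Ω : Type*} [MeasurableSpace Ω] {ν : Measure Ω}
    {g s : Ω → ℝ} (hg : Integrable g ν) (hs2 : Integrable (fun x => s x ^ 2) ν)
    (hgs : Integrable (fun x => g x ^ 2 / s x ^ 2) ν) (hs : ∀ᵐ x ∂ν, 0 < s x)
    {K : ℝ} (hK : 0 < K) (hsK : ∫ x, s x ^ 2 ∂ν ≤ K) :
    (∫ x, |g x| ∂ν) ^ 2 / K ≤ ∫ x, g x ^ 2 / s x ^ 2 ∂ν := by
  set a := (∫ x, |g x| ∂ν) / K with ha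
  have h : ∫ x, (2 * a * |g x| - a ^ 2 * s x ^ 2) ∂ν ≤ ∫ x, g x ^ 2 / s x ^ 2 ∂ν := by
    refine integral_mono_ae ((hg.abs.const_mul _).sub (hs2.const_mul _)) hgs ?_
    filter_upwards [hs] with x hx
    have e : g x ^ 2 / s x ^ 2 - (2 * a * |g x| - a ^ 2 * s x ^ 2)
        = (|g x| / s x - a * s x) ^ 2 := by
      rw [← sq_abs (g x)]
      field_simp
      ring
    nlinarith [sq_nonneg (|g x| / s x - a * s x)]
  rw [integral_sub (hg.abs.const_mul _) (hs2.const_mul _), integral_const_mul,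
    integral_const_mul] at h
  have e : ∫ x, |g x| ∂ν = a * K := by rw [ha]; field_simp
  rw [e] at h ⊢
  have e2 : (a * K) ^ 2 / K = a ^ 2 * K := by field_simp
  rw [e2]
  nlinarith [mul_le_mul_of_nonneg_left hsK (sq_nonneg a)]

lemma integrable_sq_div_sigmaMax_sq {n m r : ℕ} (B : Fin r → Matrix (Fin n) (Fin m) ℝ)
    (v : Fin m × Fin n → ℝ) :
    Integrable (fun x => (∑ p, v p * vecM (∑ k, x k • B k) p) ^ 2
      / sigmaMax (∑ k, x k • B k) ^ 2) (stdGaussianPi r) := by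
  have hs := (continuous_sigmaMax_sum B).measurable
  refine Integrable.of_bound (C := (∑ p, |v p|) ^ 2) ?_ (.of_forall fun x => ?_)
  · simp only [sum_mul_vecM_sum_smul]
    exact Measurable.aestronglyMeasurable (by fun_prop)
  · rw [Real.norm_of_nonneg (by positivity)]
    refine div_le_of_le_mul₀ (sq_nonneg _) (sq_nonneg _) ?_
    rw [← mul_pow]
    exact sq_le_sq' (abs_le.1 (abs_sum_mul_vecM_le v _)).1 (abs_le.1 (abs_sum_mul_vecM_le v _)).2

lemma integrable_sum_mul_stdGaussianPi {r : ℕ} (c : Fin r → ℝ) :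
    Integrable (fun x => ∑ k, c k * x k) (stdGaussianPi r) := by
  convert integrable_mvPolynomial_eval (∑ k, MvPolynomial.C (c k) * MvPolynomial.X k) using 2
    with x
  simp

lemma div_mul_dotProduct_le_integral {n m r : ℕ} (hm : 1 ≤ m)
    {B : Fin r → Matrix (Fin n) (Fin m) ℝ} (hB : B ≠ 0) {K : ℝ} (hK : 0 < K)
    (hsK : ∫ x, sigmaMax (∑ k, x k • B k) ^ 2 ∂stdGaussianPi r ≤ K) (v : Fin m × Fin n → ℝ) :
    2 / (Real.pi * K) * (v ⬝ᵥ (∑ k, vecMulVec (vecM (B k)) (vecM (B k))) *ᵥ v)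
      ≤ ∫ x, (∑ p, v p * vecM (∑ k, x k • B k) p) ^ 2
          / sigmaMax (∑ k, x k • B k) ^ 2 ∂stdGaussianPi r := by
  have hg : Integrable (fun x => ∑ p, v p * vecM (∑ k, x k • B k) p) (stdGaussianPi r) := by
    simp only [sum_mul_vecM_sum_smul]
    exact integrable_sum_mul_stdGaussianPi _
  have hs2 : Integrable (fun x => sigmaMax (∑ k, x k • B k) ^ 2) (stdGaussianPi r) :=
    integrable_sigmaMax_pow hm B 1
  have h := sq_integral_abs_div_le_integral_sq_div_sq hg hs2
    (integrable_sq_div_sigmaMax_sq B v) (ae_sigmaMax_pos hB) hK hsK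
  refine le_trans (le_of_eq ?_) h
  simp only [sum_mul_vecM_sum_smul]
  rw [integral_abs_sum_mul_stdGaussianPi, dotProduct_sum_vecMulVec_mulVec, mul_pow,
    Real.sq_sqrt (Finset.sum_nonneg fun k _ => sq_nonneg _), Real.sq_sqrt (by positivity)]
  field_simp

lemma map_eq_stdGaussianPi {r : ℕ} {Ω : Type*} [MeasurableSpace Ω] {μ : Measure Ω}
    [IsProbabilityMeasure μ] {z : Fin r → Ω → ℝ} (hz : ∀ k, AEMeasurable (z k) μ)
    (hindep : iIndepFun z μ) (hgauss : ∀ k, Measure.map (z k) μ = gaussianReal 0 1) :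
    μ.map (fun ω k => z k ω) = stdGaussianPi r := by
  rw [(iIndepFun_iff_map_fun_eq_pi_map hz).1 hindep]
  simp only [hgauss]
  rfl

/-- Theorem 2.1.
For a Gaussian matrix series `G = ∑ₖ zₖ Bₖ` with `∑ₖ Bₖᵀ Bₖ = Iₘ`,
`∑ₖ Bₖ Bₖᵀ ⪯ Iₙ` and covariance `W = ∑ₖ vec(Bₖ)vec(Bₖ)ᵀ`, we have
`σmax(G) > 0` a.s. and
`E[vec(G)vec(G)ᵀ/σmax(G)²] ⪰ max(2/(πm), 1/(π(log(2m)+1))) W`. -/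
theorem stmt3 {n m r : ℕ} (hm : 1 ≤ m) (hmn : m ≤ n)
    (B : Fin r → Matrix (Fin n) (Fin m) ℝ)
    (hBtB : ∑ k, (B k)ᵀ * B k = 1)
    (hBBt : ((1 : Matrix (Fin n) (Fin n) ℝ) - ∑ k, B k * (B k)ᵀ).PosSemidef)
    {Ω : Type*} [MeasurableSpace Ω] (μ : Measure Ω) [IsProbabilityMeasure μ]
    (z : Fin r → Ω → ℝ)
    (hindep : iIndepFun z μ)
    (hgauss : ∀ k, Measure.map (z k) μ = gaussianReal 0 1)
    (W : Matrix (Fin m × Fin n) (Fin m × Fin n) ℝ)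
    (hW : W = ∑ k, Matrix.vecMulVec (vecM (B k)) (vecM (B k))) :
    (∀ᵐ ω ∂μ, 0 < sigmaMax (∑ k, z k ω • B k)) ∧
    ∀ v : Fin m × Fin n → ℝ,
      max (2 / (Real.pi * m)) (1 / (Real.pi * (Real.log (2 * m) + 1)))
          * (v ⬝ᵥ W.mulVec v)
        ≤ ∫ ω, (∑ p : Fin m × Fin n, v p * vecM (∑ k, z k ω • B k) p) ^ 2
              / (sigmaMax (∑ k, z k ω • B k)) ^ 2 ∂μ := by
  have hz : ∀ k, AEMeasurable (z k) μ := fun k =>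
    AEMeasurable.of_map_ne_zero (by rw [hgauss]; exact IsProbabilityMeasure.ne_zero _)
  have hz' : AEMeasurable (fun ω k => z k ω) μ := aemeasurable_pi_lambda _ hz
  have hmap := map_eq_stdGaussianPi hz hindep hgauss
  have hB : B ≠ 0 := by
    rintro rfl
    have := congrFun (congrFun hBtB ⟨0, hm⟩) ⟨0, hm⟩
    simp at this
  have hs := (continuous_sigmaMax_sum B).measurable
  refine ⟨ae_of_ae_map hz' (by rw [hmap]; exact ae_sigmaMax_pos hB), fun v => ?_⟩
  have hfi := integral_map (μ := μ) hz'
    (f := fun x => (∑ p, v p * vecM (∑ k, x k • B k) p) ^ 2 / sigmaMax (∑ k, x k • B k) ^ 2)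
    (by rw [hmap]; exact (integrable_sq_div_sigmaMax_sq B v).aestronglyMeasurable)
  rw [hmap] at hfi
  rw [← hfi, hW]
  have hm1 : (1 : ℝ) ≤ m := by exact_mod_cast hm
  have hlog : 0 ≤ Real.log (2 * m) := Real.log_nonneg (by linarith)
  have hmom := integral_sigmaMax_pow_le hm hBtB hBBt
  rcases max_cases (2 / (Real.pi * m)) (1 / (Real.pi * (Real.log (2 * m) + 1))) with h | h <;>
    rw [h.1]
  · refine div_mul_dotProduct_le_integral hm hB (by linarith) ?_ v
    simpa using hmom 1
  · have e : 1 / (Real.pi * (Real.log (2 * m) + 1))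
        = 2 / (Real.pi * (2 * Real.log (2 * m) + 2)) := by
      field_simp
    rw [e]
    exact div_mul_dotProduct_le_integral hm hB (by linarith)
      (integral_sq_le_log hs (fun _ => sigmaMax_nonneg _) hm1 (integrable_sigmaMax_pow hm B) hmom) v
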